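/- Let a, b > 0 and let T : ℝ^m → ℝ^m be given by T(x) = [1 + a exp(−‖x‖²/b)]⁻¹ x. Then T is a bijection, its inverse is T⁻¹(y) = g(‖y‖) y/‖y‖ (with the convention g(‖y‖)y/‖y‖ = 0 for y = 0), where g : [0,∞) → [0,∞) is the inverse of the strictly increasing continuous bijection h(ξ) = ξ/(1 + a exp(−ξ²/b)) of [0,∞) onto itself; moreover T⁻¹ is continuously differentiable and ‖T⁻¹(y)‖ = g(‖y‖) for all y ∈ ℝ^m. -/

import Mathlib

open MeasureTheory Matrix Real Filter Topology ENNReal NNReal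

noncomputable section

/-- Euclidean norm of a finite tuple. -/
def enorm2 {ι : Type*} [Fintype ι] (v : ι → ℝ) : ℝ := Real.sqrt (∑ i, v i ^ 2)

/-- The `N(0, σ² I)` distribution on `ι → ℝ`, given by its Lebesgue density. -/
def gaussPi (ι : Type*) [Fintype ι] (σ2 : ℝ) : Measure (ι → ℝ) :=
  volume.withDensity fun x => ENNReal.ofReal
    ((2 * π * σ2) ^ (-(Fintype.card ι : ℝ) / 2) * Real.exp (-(enorm2 x) ^ 2 / (2 * σ2)))

/-- The Lebesgue density of the `N(0, σ² Q⁻¹)` distribution on `ι → ℝ`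
(for `Q` symmetric positive definite). -/
def gaussCovDens {ι : Type*} [Fintype ι] [DecidableEq ι] (σ2 : ℝ) (Q : Matrix ι ι ℝ)
    (x : ι → ℝ) : ℝ :=
  (2 * π * σ2) ^ (-(Fintype.card ι : ℝ) / 2) * Real.sqrt Q.det *
    Real.exp (-(x ⬝ᵥ Q.mulVec x) / (2 * σ2))

/-- The `N(0, σ² Q⁻¹)` distribution on `ι → ℝ` (for `Q` symmetric positive definite),
given by its Lebesgue density. -/
def gaussCov {ι : Type*} [Fintype ι] [DecidableEq ι] (σ2 : ℝ) (Q : Matrix ι ι ℝ) :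
    Measure (ι → ℝ) :=
  volume.withDensity fun x => ENNReal.ofReal (gaussCovDens σ2 Q x)

open Classical in
/-- Symmetric positive semidefinite square root (junk value `0` off the psd cone). -/
def msqrt {ι : Type*} [Fintype ι] [DecidableEq ι] (A : Matrix ι ι ℝ) : Matrix ι ι ℝ :=
  if h : A.PosSemidef then
    (h.1.eigenvectorUnitary : Matrix ι ι ℝ) * diagonal (Real.sqrt ∘ h.1.eigenvalues) *
      (star h.1.eigenvectorUnitary : Matrix ι ι ℝ)
  else 0

open Classical in
/-- Smallest eigenvalue of a symmetric matrix (junk value `0` otherwise). -/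
def lamMin {ι : Type*} [Fintype ι] [DecidableEq ι] (A : Matrix ι ι ℝ) : ℝ :=
  if h : A.IsHermitian then ⨅ i, h.eigenvalues i else 0

open Classical in
/-- Largest eigenvalue of a symmetric matrix (junk value `0` otherwise). -/
def lamMax {ι : Type*} [Fintype ι] [DecidableEq ι] (A : Matrix ι ι ℝ) : ℝ :=
  if h : A.IsHermitian then ⨆ i, h.eigenvalues i else 0

variable {n k₁ k₂ : ℕ}

/-- First block of columns of the design matrix. -/
def X1 (X : Matrix (Fin n) (Fin k₁ ⊕ Fin k₂) ℝ) : Matrix (Fin n) (Fin k₁) ℝ :=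
  X.submatrix id Sum.inl

/-- Second block of columns of the design matrix. -/
def X2 (X : Matrix (Fin n) (Fin k₁ ⊕ Fin k₂) ℝ) : Matrix (Fin n) (Fin k₂) ℝ :=
  X.submatrix id Sum.inr

/-- Unrestricted least squares estimator. -/
def betaU (X : Matrix (Fin n) (Fin k₁ ⊕ Fin k₂) ℝ) (Y : Fin n → ℝ) : (Fin k₁ ⊕ Fin k₂) → ℝ :=
  (Xᵀ * X)⁻¹.mulVec (Xᵀ.mulVec Y)

/-- Restricted least squares estimator. -/
def betaR (X : Matrix (Fin n) (Fin k₁ ⊕ Fin k₂) ℝ) (Y : Fin n → ℝ) : (Fin k₁ ⊕ Fin k₂) → ℝ :=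
  Sum.elim (((X1 X)ᵀ * X1 X)⁻¹.mulVec ((X1 X)ᵀ.mulVec Y)) (fun _ => 0)

/-- Risk estimate of the restricted model. -/
def rR (X : Matrix (Fin n) (Fin k₁ ⊕ Fin k₂) ℝ) (σ2 : ℝ) (Y : Fin n → ℝ) : ℝ :=
  Y ⬝ᵥ Y - betaR X Y ⬝ᵥ (Xᵀ * X).mulVec (betaR X Y) + σ2 * (2 * k₁ - n)

/-- Risk estimate of the unrestricted model. -/
def rU (X : Matrix (Fin n) (Fin k₁ ⊕ Fin k₂) ℝ) (σ2 : ℝ) (Y : Fin n → ℝ) : ℝ :=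
  Y ⬝ᵥ Y - betaU X Y ⬝ᵥ (Xᵀ * X).mulVec (betaU X Y) + σ2 * (2 * (k₁ + k₂) - n)

/-- The model averaging weight `λ̂`. -/
def lamHat (α σ2 : ℝ) (X : Matrix (Fin n) (Fin k₁ ⊕ Fin k₂) ℝ) (Y : Fin n → ℝ) : ℝ :=
  Real.exp (-(α * rR X σ2 Y) / σ2) /
    (Real.exp (-(α * rR X σ2 Y) / σ2) + Real.exp (-(α * rU X σ2 Y) / σ2))

/-- Leung and Barron's model averaging estimator `β̃`. -/
def mavg (α σ2 : ℝ) (X : Matrix (Fin n) (Fin k₁ ⊕ Fin k₂) ℝ) (Y : Fin n → ℝ) :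
    (Fin k₁ ⊕ Fin k₂) → ℝ :=
  lamHat α σ2 X Y • betaR X Y + (1 - lamHat α σ2 X Y) • betaU X Y

/-- Projection on the column space of `X₁`. -/
def projR (X : Matrix (Fin n) (Fin k₁ ⊕ Fin k₂) ℝ) : Matrix (Fin n) (Fin n) ℝ :=
  X1 X * ((X1 X)ᵀ * X1 X)⁻¹ * (X1 X)ᵀ

/-- Projection on the column space of `X`. -/
def projU (X : Matrix (Fin n) (Fin k₁ ⊕ Fin k₂) ℝ) : Matrix (Fin n) (Fin n) ℝ :=
  X * (Xᵀ * X)⁻¹ * Xᵀ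

/-- The distribution `P_{n,β,σ}` of `Y = Xβ + u`, `u ~ N(0, σ² Iₙ)`. -/
def Pmeas (X : Matrix (Fin n) (Fin k₁ ⊕ Fin k₂) ℝ) (β : (Fin k₁ ⊕ Fin k₂) → ℝ) (σ2 : ℝ) :
    Measure (Fin n → ℝ) :=
  (gaussPi (Fin n) σ2).map (fun u => X.mulVec β + u)

/-- The function `h_{a,b}(ξ) = ξ / (1 + a exp(−ξ²/b))`. -/
def hfun (a b ξ : ℝ) : ℝ := ξ / (1 + a * Real.exp (-ξ ^ 2 / b))

/-- The inverse `g_{a,b}` of `h_{a,b}`. -/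
def gfun (a b : ℝ) : ℝ → ℝ := Function.invFun (hfun a b)

open Classical in
/-- `g(‖w‖) w / ‖w‖`, with the convention that this is `0` for `w = 0`. -/
def gdir (a b : ℝ) {ι : Type*} [Fintype ι] (w : ι → ℝ) : ι → ℝ :=
  if w = 0 then 0 else (gfun a b (enorm2 w) / enorm2 w) • w


/-- The finite-sample density `f_{n,β,σ}` of `√n(β̃ − β)` (Theorem 3 of the paper). -/
def fdens {n k₁ k₂ : ℕ} (X : Matrix (Fin n) (Fin k₁ ⊕ Fin k₂) ℝ)
    (β : (Fin k₁ ⊕ Fin k₂) → ℝ) (σ2 α : ℝ) (t : (Fin k₁ ⊕ Fin k₂) → ℝ) : ℝ :=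
  let a := Real.exp (2 * α * k₂)
  let b := σ2 / α
  let S := (X2 X)ᵀ * (1 - projR X) * X2 X
  let w := (Real.sqrt n)⁻¹ • (msqrt S).mulVec ((t ∘ Sum.inr) + Real.sqrt n • (β ∘ Sum.inr))
  (2 * π * σ2) ^ (-((k₁ : ℝ) + k₂) / 2) * Real.sqrt (((n : ℝ)⁻¹ • (Xᵀ * X)).det) *
    Real.exp (-(enorm2 ((Real.sqrt n)⁻¹ •
        ((msqrt ((X1 X)ᵀ * X1 X)).mulVec (t ∘ Sum.inl) +
          ((msqrt ((X1 X)ᵀ * X1 X))⁻¹ * (X1 X)ᵀ * X2 X).mulVec (t ∘ Sum.inr)))) ^ 2 /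
      (2 * σ2)) *
    (1 + Real.exp (-(α / σ2) * gfun a b (enorm2 w) ^ 2 + 2 * α * k₂)) ^ (k₂ : ℕ) *
    (1 + (2 * α / σ2) * gfun a b (enorm2 w) ^ 2 *
        (1 + Real.exp ((α / σ2) * gfun a b (enorm2 w) ^ 2 - 2 * α * k₂))⁻¹)⁻¹ *
    Real.exp (-(enorm2 (gdir a b w - (msqrt S).mulVec (β ∘ Sum.inr))) ^ 2 / (2 * σ2))

/-- The density `f_{∞,γ}` of the limiting distribution (formula (13) of the paper),
stated for a general symmetric positive definite matrix in place of `Q`. -/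
def fInfty {k₁ k₂ : ℕ} (Q : Matrix (Fin k₁ ⊕ Fin k₂) (Fin k₁ ⊕ Fin k₂) ℝ) (σ2 α : ℝ)
    (γ : Fin k₂ → ℝ) (t : (Fin k₁ ⊕ Fin k₂) → ℝ) : ℝ :=
  let a := Real.exp (2 * α * k₂)
  let b := σ2 / α
  let S := Q.toBlocks₂₂ - Q.toBlocks₂₁ * Q.toBlocks₁₁⁻¹ * Q.toBlocks₁₂
  let w := (msqrt S).mulVec ((t ∘ Sum.inr) + γ)
  (2 * π * σ2) ^ (-((k₁ : ℝ) + k₂) / 2) * Real.sqrt Q.det *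
    Real.exp (-(enorm2 ((msqrt Q.toBlocks₁₁).mulVec (t ∘ Sum.inl) +
        ((msqrt Q.toBlocks₁₁)⁻¹ * Q.toBlocks₁₂).mulVec (t ∘ Sum.inr))) ^ 2 / (2 * σ2)) *
    (1 + Real.exp (-(α / σ2) * gfun a b (enorm2 w) ^ 2 + 2 * α * k₂)) ^ (k₂ : ℕ) *
    (1 + (2 * α / σ2) * gfun a b (enorm2 w) ^ 2 *
        (1 + Real.exp ((α / σ2) * gfun a b (enorm2 w) ^ 2 - 2 * α * k₂))⁻¹)⁻¹ *
    Real.exp (-(enorm2 (gdir a b w - (msqrt S).mulVec γ)) ^ 2 / (2 * σ2))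


/-- The limiting law (12): the distribution of
`B_∞γ + C_∞Z₁ + [1 + exp(2αk₂) exp(−α‖Z₂ + (Q₂₂ − Q₂₁Q₁₁⁻¹Q₁₂)^{1/2}γ‖²/σ²)]⁻¹
  · (D_∞Z₂ − B_∞γ)` with `Z₁ ~ N(0, σ²I_{k₁})`, `Z₂ ~ N(0, σ²I_{k₂})` independent. -/
def limitLaw {k₁ k₂ : ℕ} (Q : Matrix (Fin k₁ ⊕ Fin k₂) (Fin k₁ ⊕ Fin k₂) ℝ) (σ2 α : ℝ)
    (γ : Fin k₂ → ℝ) : Measure ((Fin k₁ ⊕ Fin k₂) → ℝ) :=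
  ((gaussPi (Fin k₁) σ2).prod (gaussPi (Fin k₂) σ2)).map
    (fun Z : (Fin k₁ → ℝ) × (Fin k₂ → ℝ) =>
      (fromRows (Q.toBlocks₁₁⁻¹ * Q.toBlocks₁₂) (-1)).mulVec γ +
      (fromRows (msqrt Q.toBlocks₁₁)⁻¹ 0).mulVec Z.1 +
      (1 + Real.exp (2 * α * k₂) *
          Real.exp (-α * (enorm2 (Z.2 +
            (msqrt (Q.toBlocks₂₂ - Q.toBlocks₂₁ * Q.toBlocks₁₁⁻¹ * Q.toBlocks₁₂)).mulVec
              γ)) ^ 2 / σ2))⁻¹ •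
        ((fromRows
            (-(Q.toBlocks₁₁⁻¹ * Q.toBlocks₁₂ *
              (msqrt (Q.toBlocks₂₂ - Q.toBlocks₂₁ * Q.toBlocks₁₁⁻¹ * Q.toBlocks₁₂))⁻¹))
            ((msqrt (Q.toBlocks₂₂ - Q.toBlocks₂₁ * Q.toBlocks₁₁⁻¹ * Q.toBlocks₁₂))⁻¹)).mulVec
            Z.2 -
          (fromRows (Q.toBlocks₁₁⁻¹ * Q.toBlocks₁₂) (-1)).mulVec γ))


lemma hden_pos (a b : ℝ) (ha : 0 < a) (ξ : ℝ) : 0 < 1 + a * Real.exp (-ξ ^ 2 / b) := by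
  positivity

lemma hfun_strictMono (a b : ℝ) (ha : 0 < a) (hb : 0 < b) : StrictMono (hfun a b) := by
  apply strictMono_of_odd_strictMonoOn_nonneg
  · intro x
    simp [hfun, neg_div]
  · intro x hx y hy hxy
    simp only [Set.mem_Ici] at hx hy
    unfold hfun
    rw [div_lt_div_iff₀ (hden_pos a b ha x) (hden_pos a b ha y)]
    have h1 : Real.exp (-y ^ 2 / b) ≤ Real.exp (-x ^ 2 / b) := by
      apply Real.exp_le_exp.2
      gcongr
    have h2 := hden_pos a b ha x
    have h3 : 1 + a * Real.exp (-y ^ 2 / b) ≤ 1 + a * Real.exp (-x ^ 2 / b) := by gcongr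
    calc x * (1 + a * Real.exp (-y ^ 2 / b)) ≤ x * (1 + a * Real.exp (-x ^ 2 / b)) := by gcongr
      _ < y * (1 + a * Real.exp (-x ^ 2 / b)) := by gcongr

lemma hfun_surj (a b : ℝ) (ha : 0 < a) (hb : 0 < b) : Function.Surjective (hfun a b) := by
  have hle : ∀ x : ℝ, 1 + a * Real.exp (-x ^ 2 / b) ≤ 1 + a := by
    intro x
    have : Real.exp (-x ^ 2 / b) ≤ 1 := by
      apply Real.exp_le_one_iff.2
      rw [neg_div]
      have : 0 ≤ x ^ 2 / b := by positivity
      linarith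
    nlinarith
  apply Continuous.surjective
  · unfold hfun
    exact continuous_id.div (by fun_prop) (fun x => (hden_pos a b ha x).ne')
  · refine tendsto_atTop_mono' _ ?_ (tendsto_id.atTop_div_const (show 0 < 1 + a by linarith))
    filter_upwards [eventually_ge_atTop 0] with x hx
    exact div_le_div_of_nonneg_left hx (hden_pos a b ha x) (hle x)
  · refine tendsto_atBot_mono' _ ?_ (tendsto_id.atBot_div_const (show 0 < 1 + a by linarith))
    filter_upwards [eventually_le_atBot 0] with x hx
    have := div_le_div_of_nonneg_left (neg_nonneg.2 hx) (hden_pos a b ha x) (hle x)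
    rw [neg_div, neg_div] at this
    simpa [hfun] using neg_le_neg_iff.1 this

lemma gfun_hfun (a b : ℝ) (ha : 0 < a) (hb : 0 < b) (x : ℝ) : gfun a b (hfun a b x) = x :=
  Function.leftInverse_invFun (hfun_strictMono a b ha hb).injective x

lemma hfun_gfun (a b : ℝ) (ha : 0 < a) (hb : 0 < b) (x : ℝ) : hfun a b (gfun a b x) = x :=
  Function.rightInverse_invFun (hfun_surj a b ha hb) x

lemma gfun_zero (a b : ℝ) (ha : 0 < a) (hb : 0 < b) : gfun a b 0 = 0 := by
  have := gfun_hfun a b ha hb 0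
  simpa [hfun] using this

lemma gfun_nonneg (a b : ℝ) (ha : 0 < a) (hb : 0 < b) (x : ℝ) (hx : 0 ≤ x) :
    0 ≤ gfun a b x := by
  rw [← (hfun_strictMono a b ha hb).le_iff_le, hfun_gfun a b ha hb]
  simpa [hfun] using hx

lemma enorm2_smul {ι : Type*} [Fintype ι] (c : ℝ) (v : ι → ℝ) :
    enorm2 (c • v) = |c| * enorm2 v := by
  unfold enorm2
  simp only [Pi.smul_apply, smul_eq_mul, mul_pow, ← Finset.mul_sum]
  rw [Real.sqrt_mul (sq_nonneg c), Real.sqrt_sq_eq_abs]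

lemma enorm2_nonneg {ι : Type*} [Fintype ι] (v : ι → ℝ) : 0 ≤ enorm2 v := Real.sqrt_nonneg _

lemma enorm2_sq {ι : Type*} [Fintype ι] (v : ι → ℝ) : enorm2 v ^ 2 = ∑ i, v i ^ 2 :=
  Real.sq_sqrt (Finset.sum_nonneg fun i _ => sq_nonneg _)

lemma sumsq_eq_zero {ι : Type*} [Fintype ι] (v : ι → ℝ) (h : ∑ i, v i ^ 2 = 0) : v = 0 := by
  rw [Finset.sum_eq_zero_iff_of_nonneg (fun i _ => sq_nonneg _)] at h
  ext i
  simpa using h i (Finset.mem_univ i)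

lemma enorm2_pos {ι : Type*} [Fintype ι] (v : ι → ℝ) (hv : v ≠ 0) : 0 < enorm2 v := by
  refine (enorm2_nonneg v).lt_of_ne' fun h => hv (sumsq_eq_zero v ?_)
  rw [← enorm2_sq, h]; simp

lemma enorm2_zero {ι : Type*} [Fintype ι] : enorm2 (0 : ι → ℝ) = 0 := by simp [enorm2]

lemma enorm2_gdir (a b : ℝ) (ha : 0 < a) (hb : 0 < b) {ι : Type*} [Fintype ι] (y : ι → ℝ) :
    enorm2 (gdir a b y) = gfun a b (enorm2 y) := by
  unfold gdir
  split_ifs with h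
  · subst h; rw [enorm2_zero, gfun_zero a b ha hb]
  · have h1 := enorm2_pos y h
    have h2 := gfun_nonneg a b ha hb _ h1.le
    rw [enorm2_smul, abs_of_nonneg (by positivity)]
    field_simp

/-- The map `T`. -/
def Tmap (a b : ℝ) {ι : Type*} [Fintype ι] (x : ι → ℝ) : ι → ℝ :=
  (1 + a * Real.exp (-(enorm2 x) ^ 2 / b))⁻¹ • x

lemma Tmap_gdir (a b : ℝ) (ha : 0 < a) (hb : 0 < b) {ι : Type*} [Fintype ι] (y : ι → ℝ) :
    Tmap a b (gdir a b y) = y := by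
  unfold Tmap
  rw [enorm2_gdir a b ha hb]
  unfold gdir
  split_ifs with h
  · subst h; simp
  · have h1 := enorm2_pos y h
    have h3 := hfun_gfun a b ha hb (enorm2 y)
    rw [smul_smul]
    convert one_smul ℝ y
    unfold hfun at h3
    rw [inv_mul_eq_div, div_right_comm, h3, div_self h1.ne']

lemma gdir_Tmap (a b : ℝ) (ha : 0 < a) (hb : 0 < b) {ι : Type*} [Fintype ι] (x : ι → ℝ) :
    gdir a b (Tmap a b x) = x := by
  by_cases hx : x = 0
  · subst hx; simp [Tmap, gdir]
  have hr := enorm2_pos x hx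
  have hd := hden_pos a b ha (enorm2 x)
  have hn : enorm2 (Tmap a b x) = hfun a b (enorm2 x) := by
    unfold Tmap
    rw [enorm2_smul, abs_of_pos (inv_pos.2 hd), inv_mul_eq_div, hfun]
  have hT : Tmap a b x ≠ 0 := by
    unfold Tmap
    exact smul_ne_zero (inv_pos.2 hd).ne' hx
  unfold gdir
  rw [if_neg hT, hn, gfun_hfun a b ha hb]
  unfold Tmap
  rw [smul_smul]
  convert one_smul ℝ x
  unfold hfun
  field_simp

lemma Tmap_contDiff (a b : ℝ) (ha : 0 < a) {m : ℕ} :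
    ContDiff ℝ 1 (Tmap a b : (Fin m → ℝ) → (Fin m → ℝ)) := by
  unfold Tmap
  simp only [enorm2_sq]
  have h : ContDiff ℝ 1 (fun x : Fin m → ℝ => (1 + a * Real.exp (-(∑ i, x i ^ 2) / b))⁻¹) := by
    apply ContDiff.inv
    · fun_prop
    · intro x; positivity
  exact h.smul contDiff_id

/-- The derivative of `T` is injective. -/
lemma Tmap_deriv (a b : ℝ) (ha : 0 < a) (hb : 0 < b) {m : ℕ} (x : Fin m → ℝ) :
    ∃ L : (Fin m → ℝ) ≃L[ℝ] (Fin m → ℝ),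
      HasFDerivAt (Tmap a b) (L : (Fin m → ℝ) →L[ℝ] (Fin m → ℝ)) x := by
  set E := Real.exp (-(∑ i, x i ^ 2) / b) with hE
  have hEp : 0 < E := Real.exp_pos _
  let s' : (Fin m → ℝ) →L[ℝ] ℝ := ∑ i, (2 * x i) • ContinuousLinearMap.proj i
  have hs : HasFDerivAt (fun y : Fin m → ℝ => ∑ i, y i ^ 2) s' x := by
    apply HasFDerivAt.fun_sum
    intro i _
    have := ((ContinuousLinearMap.proj (R := ℝ) (φ := fun _ : Fin m => ℝ) i).hasFDerivAt
      (x := x)).pow 2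
    simpa using this
  have hφ : HasDerivAt (fun s : ℝ => (1 + a * Real.exp (-s / b))⁻¹)
      (a * E / b / (1 + a * E) ^ 2) (∑ i, x i ^ 2) := by
    have h1 : HasDerivAt (fun s : ℝ => 1 + a * Real.exp (-s / b)) (a * (E * (-1 / b)))
      (∑ i, x i ^ 2) :=
      ((((hasDerivAt_id _).neg.div_const b).exp).const_mul a).const_add 1
    have h2 := h1.inv (by positivity)
    have h3 : -(a * (E * (-1 / b))) / (1 + a * E) ^ 2 = a * E / b / (1 + a * E) ^ 2 := by ring
    rw [← h3]
    exact h2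
  have hc := hφ.comp_hasFDerivAt x hs
  have hT := hc.smul (hasFDerivAt_id x)
  let D : (Fin m → ℝ) →L[ℝ] (Fin m → ℝ) := (1 + a * E)⁻¹ • ContinuousLinearMap.id ℝ (Fin m → ℝ) +
      ((a * E / b / (1 + a * E) ^ 2) • s').smulRight x
  have hT' : HasFDerivAt (Tmap a b) D x := by
    refine HasFDerivAt.congr_of_eventuallyEq (f := _) hT (Eventually.of_forall fun y => ?_)
    simp [Tmap, enorm2_sq]
  have key : ∀ v, D v = (1 + a * E)⁻¹ • v +
      ((a * E / b / (1 + a * E) ^ 2) * (2 * ∑ i, x i * v i)) • x := by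
    intro v
    simp [D, s', Finset.mul_sum, mul_assoc, hE]
  have hinj : Function.Injective (D : (Fin m → ℝ) →ₗ[ℝ] (Fin m → ℝ)) := by
    rw [injective_iff_map_eq_zero]
    intro v hv
    have hv : D v = 0 := hv
    rw [key] at hv
    set c := (1 + a * E)⁻¹ with hc
    set d := a * E / b / (1 + a * E) ^ 2
    set p := ∑ i, x i * v i with hp
    have hcp : 0 < c := by positivity
    have hd : 0 ≤ d := by positivity
    have h0 : c * (∑ i, v i ^ 2) + d * (2 * p) * p = 0 := by
      rw [hp, Finset.mul_sum, Finset.mul_sum, ← Finset.sum_add_distrib]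
      apply Finset.sum_eq_zero
      intro i _
      have := congrFun hv i
      simp only [Pi.add_apply, Pi.smul_apply, smul_eq_mul, Pi.zero_apply] at this
      linear_combination v i * this
    have h1 : 0 ≤ ∑ i, v i ^ 2 := Finset.sum_nonneg fun i _ => sq_nonneg _
    have h2 : 0 ≤ d * (2 * p) * p := by
      have : 0 ≤ d * (2 * p ^ 2) := by positivity
      linarith [show d * (2 * p) * p = d * (2 * p ^ 2) by ring]
    apply sumsq_eq_zero
    have h3 : c * (∑ i, v i ^ 2) = 0 := by
      have := mul_nonneg hcp.le h1
      linarith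
    exact (mul_eq_zero.1 h3).resolve_left hcp.ne'
  refine ⟨(LinearEquiv.ofInjectiveEndo _ hinj).toContinuousLinearEquiv, ?_⟩
  convert hT' using 1
  ext1 v
  rfl

lemma gdir_contDiff (a b : ℝ) (ha : 0 < a) (hb : 0 < b) {m : ℕ} :
    ContDiff ℝ 1 (gdir a b : (Fin m → ℝ) → (Fin m → ℝ)) := by
  choose L hL using fun x : Fin m → ℝ => Tmap_deriv a b ha hb x
  have hC := Tmap_contDiff a b ha (m := m)
  have hopen : IsOpenMap (Tmap a b : (Fin m → ℝ) → (Fin m → ℝ)) :=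
    isOpenMap_of_hasStrictFDerivAt_equiv (f' := L)
      fun x => hC.contDiffAt.hasStrictFDerivAt' (hL x) one_ne_zero
  let e : (Fin m → ℝ) ≃ (Fin m → ℝ) :=
    ⟨Tmap a b, gdir a b, gdir_Tmap a b ha hb, Tmap_gdir a b ha hb⟩
  exact (e.toHomeomorphOfContinuousOpen hC.continuous hopen).contDiff_symm (f₀' := L) hL hC

/-- `T(x) = [1 + a exp(−‖x‖²/b)]⁻¹ x` is a bijection of `ℝ^m` with inverse
`T⁻¹(y) = g(‖y‖) y/‖y‖` (`= 0` for `y = 0`); moreover `T⁻¹` is continuously differentiable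
and `‖T⁻¹(y)‖ = g(‖y‖)` for all `y`. -/
theorem statement16 (a b : ℝ) (ha : 0 < a) (hb : 0 < b) (m : ℕ) (hm : 0 < m) :
    Function.Bijective
      (fun x : Fin m → ℝ => (1 + a * Real.exp (-(enorm2 x) ^ 2 / b))⁻¹ • x) ∧
    (∀ y : Fin m → ℝ,
      (fun x : Fin m → ℝ => (1 + a * Real.exp (-(enorm2 x) ^ 2 / b))⁻¹ • x) (gdir a b y) =
        y) ∧
    (∀ x : Fin m → ℝ,
      gdir a b ((fun x : Fin m → ℝ => (1 + a * Real.exp (-(enorm2 x) ^ 2 / b))⁻¹ • x) x) =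
        x) ∧
    ContDiff ℝ 1 (gdir a b : (Fin m → ℝ) → (Fin m → ℝ)) ∧
    ∀ y : Fin m → ℝ, enorm2 (gdir a b y) = gfun a b (enorm2 y) := by
  have h1 := Tmap_gdir a b ha hb (ι := Fin m)
  have h2 := gdir_Tmap a b ha hb (ι := Fin m)
  exact ⟨⟨Function.LeftInverse.injective h2, Function.RightInverse.surjective h1⟩, h1, h2,
    gdir_contDiff a b ha hb, enorm2_gdir a b ha hb⟩

end
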